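/- For every t ≥ 0 the following equalities and inclusion of σ-algebras hold up to P-negligible sets: 𝓕_t^{K−B} ∨ 𝓕_t^{K'} = 𝓕_t^B ∨ 𝓕_t^K = 𝓕_t^B ∨ σ(K(t)) = 𝓕_t^B ∨ σ(K'(t)), and 𝓕_t^X ∨ σ(K(t)) ∨ σ(K'(t)) ⊆ 𝓕_t^B ∨ 𝓕_t^K. -/

import Mathlib

open MeasureTheory ProbabilityTheory Set Filter Topology
open scoped Classical

noncomputable section

/-- The σ-algebra generated by a process `Y` up to time `t` (over times in `[0, t]`),
i.e. `σ(Y u : 0 ≤ u ≤ t)`. -/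
def natSigma {Ω E : Type*} [MeasurableSpace E] (Y : ℝ → Ω → E) (t : ℝ) :
    MeasurableSpace Ω :=
  ⨆ u : Set.Icc (0 : ℝ) t, MeasurableSpace.comap (Y u) inferInstance

/-- The σ-algebra generated by the whole (nonnegative-time) process `Y`. -/
def procSigma {Ω E : Type*} [MeasurableSpace E] (Y : ℝ → Ω → E) :
    MeasurableSpace Ω :=
  ⨆ u : Set.Ici (0 : ℝ), MeasurableSpace.comap (Y u) inferInstance

/-- `B` is a standard one-dimensional Brownian motion (with `B 0 = 0`) under `P`:
measurable, a.s. starting at `0` and continuous on `[0, ∞)`, with Gaussian increments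
`B t - B s ~ N(0, t - s)` that are independent of the past. -/
structure IsBrownianMotion {Ω : Type*} [MeasurableSpace Ω] (P : Measure Ω)
    (B : ℝ → Ω → ℝ) : Prop where
  measurable : ∀ t : ℝ, Measurable (B t)
  init : ∀ᵐ ω ∂P, B 0 ω = 0
  cont : ∀ᵐ ω ∂P, ContinuousOn (fun t => B t ω) (Set.Ici 0)
  incr_law : ∀ s t : ℝ, 0 ≤ s → s ≤ t →
    P.map (fun ω => B t ω - B s ω) = gaussianReal 0 (Real.toNNReal (t - s))
  incr_indep : ∀ s t : ℝ, 0 ≤ s → s ≤ t →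
    Indep (MeasurableSpace.comap (fun ω => B t ω - B s ω) inferInstance)
      (natSigma B s) P

/-- `W` is a standard `n`-dimensional Brownian motion started at the origin:
its coordinate processes are independent standard one-dimensional Brownian motions. -/
def IsBrownianMotionND {Ω : Type*} [MeasurableSpace Ω] (P : Measure Ω) {n : ℕ}
    (W : ℝ → Ω → EuclideanSpace ℝ (Fin n)) : Prop :=
  (∀ i : Fin n, IsBrownianMotion P (fun t ω => W t ω i)) ∧
  iIndep (fun i : Fin n => procSigma (fun t ω => W t ω i)) P

/-- The least concave majorant on `[0, ∞)` of a function `f : ℝ → ℝ`: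
`t ↦ inf { c t | c concave on [0,∞) and c ≥ f on [0,∞) }`. -/
def concaveMajorant (f : ℝ → ℝ) (t : ℝ) : ℝ :=
  sInf {y | ∃ c : ℝ → ℝ, ConcaveOn ℝ (Set.Ici 0) c ∧ (∀ u, 0 ≤ u → f u ≤ c u) ∧ y = c t}

/-- Right-hand derivative. -/
def rightDeriv (f : ℝ → ℝ) (t : ℝ) : ℝ := derivWithin f (Set.Ioi t) t

/-- `D(t)`: the first vertex (contact point of the concave majorant) at or after time `t`. -/
def firstVertex (f : ℝ → ℝ) (t : ℝ) : ℝ :=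
  sInf {u | t ≤ u ∧ concaveMajorant f u = f u}

/-- The concave majorant process `K` of `B`. -/
def Kproc {Ω : Type*} (B : ℝ → Ω → ℝ) (t : ℝ) (ω : Ω) : ℝ :=
  concaveMajorant (fun u => B u ω) t

/-- The process `X = 2K - B`. -/
def Xproc {Ω : Type*} (B : ℝ → Ω → ℝ) (t : ℝ) (ω : Ω) : ℝ :=
  2 * Kproc B t ω - B t ω

/-- The right-hand slope process `K'` of the concave majorant. -/
def Kslope {Ω : Type*} (B : ℝ → Ω → ℝ) (t : ℝ) (ω : Ω) : ℝ :=
  rightDeriv (fun u => Kproc B u ω) t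

/-- The process `D` of first vertices: `D(t) = inf {u ≥ t : K u = B u}`. -/
def Dproc {Ω : Type*} (B : ℝ → Ω → ℝ) (t : ℝ) (ω : Ω) : ℝ :=
  firstVertex (fun u => B u ω) t

/-- A process `Y` is Markov (w.r.t. its natural filtration): for all `0 ≤ s ≤ t`,
`σ(Y t)` is conditionally independent of `σ(Y u : 0 ≤ u ≤ s)` given `σ(Y s)`. -/
def IsMarkov {Ω E : Type*} [mΩ : MeasurableSpace Ω] [StandardBorelSpace Ω]
    [MeasurableSpace E] (P : Measure Ω) [IsFiniteMeasure P] (Y : ℝ → Ω → E) : Prop :=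
  ∀ s t : ℝ, 0 ≤ s → s ≤ t →
    ∃ hs : MeasurableSpace.comap (Y s) inferInstance ≤ mΩ,
      CondIndep (MeasurableSpace.comap (Y s) inferInstance)
        (MeasurableSpace.comap (Y t) inferInstance)
        (natSigma Y s) hs P

/-- `m₁ ⊆ m₂` up to `P`-negligible sets: every `m₁`-measurable set agrees with some
`m₂`-measurable set up to a `P`-null symmetric difference. -/
def SigmaLeModNull {Ω : Type*} [MeasurableSpace Ω] (P : Measure Ω)
    (m₁ m₂ : MeasurableSpace Ω) : Prop :=
  ∀ A : Set Ω, MeasurableSet[m₁] A →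
    ∃ A' : Set Ω, MeasurableSet[m₂] A' ∧ P (symmDiff A A') = 0

/-- Equality of σ-algebras up to `P`-negligible sets. -/
def SigmaEqModNull {Ω : Type*} [mΩ : MeasurableSpace Ω] (P : Measure Ω)
    (m₁ m₂ : MeasurableSpace Ω) : Prop :=
  @SigmaLeModNull Ω mΩ P m₁ m₂ ∧ @SigmaLeModNull Ω mΩ P m₂ m₁


/-! ### Deterministic facts on the concave majorant -/

/-- Standing assumption on a path. -/
structure GoodPath (f : ℝ → ℝ) : Prop where
  cont : ContinuousOn f (Set.Ici 0)
  bdd : ∃ a b : ℝ, ∀ u, 0 ≤ u → f u ≤ a + b * u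

lemma concaveOn_affine (a b : ℝ) (s : Set ℝ) (hs : Convex ℝ s) :
    ConcaveOn ℝ s (fun u => a + b * u) := by
  refine ⟨hs, fun x _ y _ p q _ _ hpq => ?_⟩
  simp only [smul_eq_mul]
  have : a = p * a + q * a := by rw [← add_mul, hpq, one_mul]
  nlinarith

lemma cm_bddBelow (f : ℝ → ℝ) {t : ℝ} (ht : 0 ≤ t) :
    BddBelow {y | ∃ c : ℝ → ℝ, ConcaveOn ℝ (Set.Ici 0) c ∧ (∀ u, 0 ≤ u → f u ≤ c u) ∧ y = c t} := by
  refine ⟨f t, ?_⟩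
  rintro y ⟨c, -, hc, rfl⟩
  exact hc t ht

lemma cm_le {f : ℝ → ℝ} {c : ℝ → ℝ} (hc : ConcaveOn ℝ (Set.Ici 0) c)
    (hcf : ∀ u, 0 ≤ u → f u ≤ c u) {t : ℝ} (ht : 0 ≤ t) : concaveMajorant f t ≤ c t :=
  csInf_le (cm_bddBelow f ht) ⟨c, hc, hcf, rfl⟩

lemma GoodPath.nonempty {f : ℝ → ℝ} (hf : GoodPath f) (t : ℝ) :
    {y | ∃ c : ℝ → ℝ, ConcaveOn ℝ (Set.Ici 0) c ∧ (∀ u, 0 ≤ u → f u ≤ c u) ∧ y = c t}.Nonempty := by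
  obtain ⟨a, b, h⟩ := hf.bdd
  exact ⟨_, _, concaveOn_affine a b _ (convex_Ici 0), h, rfl⟩

lemma GoodPath.le_cm {f : ℝ → ℝ} (hf : GoodPath f) {t : ℝ} (ht : 0 ≤ t) :
    f t ≤ concaveMajorant f t := by
  refine le_csInf (hf.nonempty t) ?_
  rintro y ⟨c, -, hc, rfl⟩
  exact hc t ht

lemma GoodPath.concave {f : ℝ → ℝ} (hf : GoodPath f) :
    ConcaveOn ℝ (Set.Ici 0) (concaveMajorant f) := by
  refine ⟨convex_Ici 0, fun x hx y hy p q hp hq hpq => ?_⟩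
  refine le_csInf (hf.nonempty _) ?_
  rintro z ⟨c, hc, hcf, rfl⟩
  refine le_trans ?_ (hc.2 hx hy hp hq hpq)
  have h1 := cm_le hc hcf hx
  have h2 := cm_le hc hcf hy
  simp only [smul_eq_mul]
  gcongr

lemma GoodPath.cm_zero {f : ℝ → ℝ} (hf : GoodPath f) : concaveMajorant f 0 = f 0 := by
  refine le_antisymm ?_ (hf.le_cm le_rfl)
  have hk := hf.concave
  have := cm_le (f := f) (c := fun z => if z = 0 then f 0 else concaveMajorant f z) ?_ ?_
    (le_refl (0 : ℝ))
  · simpa using this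
  · have hle : ∀ z, 0 ≤ z → (if z = 0 then f 0 else concaveMajorant f z) ≤ concaveMajorant f z := by
      intro z hz
      split_ifs with h
      · subst h; exact hf.le_cm le_rfl
      · exact le_rfl
    refine ⟨convex_Ici 0, fun x hx y hy p q hp hq hpq => ?_⟩
    have hx' : 0 ≤ x := hx
    have hy' : 0 ≤ y := hy
    simp only [smul_eq_mul]
    by_cases hz : p * x + q * y = 0
    · rw [if_pos hz]
      have h1 : p * x = 0 := by nlinarith [mul_nonneg hp hx', mul_nonneg hq hy']
      have h2 : q * y = 0 := by nlinarith [mul_nonneg hp hx', mul_nonneg hq hy']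
      rcases mul_eq_zero.1 h1 with h1 | h1 <;> rcases mul_eq_zero.1 h2 with h2 | h2
      · exfalso; subst h1 h2; norm_num at hpq
      · subst h1 h2
        have : q = 1 := by linarith
        subst this; simp
      · subst h1 h2
        have : p = 1 := by linarith
        subst this; simp
      · subst h1 h2
        simp only [if_true]
        rw [← add_mul, hpq, one_mul]
    · rw [if_neg hz]
      have h3 := hk.2 hx hy hp hq hpq
      simp only [smul_eq_mul] at h3
      refine le_trans ?_ h3
      have := hle x hx'
      have := hle y hy'
      gcongr
  · intro u hu
    split_ifs with h
    · rw [h]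
    · exact hf.le_cm hu

/-- An affine function which dominates `f` on `[a, b]` and the majorant at `a` and `b` dominates
the majorant on `[a, b]`. -/
lemma GoodPath.local_dom {f : ℝ → ℝ} (hf : GoodPath f) {a b p q : ℝ} (ha : 0 ≤ a)
    (hl : ∀ u ∈ Set.Icc a b, f u ≤ p + q * u)
    (h1 : concaveMajorant f a ≤ p + q * a) (h2 : concaveMajorant f b ≤ p + q * b)
    {z : ℝ} (hz : z ∈ Set.Icc a b) : concaveMajorant f z ≤ p + q * z := by
  have hk := hf.concave
  set k := concaveMajorant f with hkdef
  set c : ℝ → ℝ := fun z => if z ∈ Set.Icc a b ∧ p + q * z < k z then p + q * z else k z with hc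
  have hck : ∀ u, c u ≤ k u := by
    intro u
    simp only [hc]
    split_ifs with h
    · exact h.2.le
    · exact le_rfl
  have key : ∀ w, 0 ≤ w → w ∈ Set.Icc a b → p + q * w < k w → ∀ u, 0 ≤ u → c u ≤ p + q * u := by
    intro w hw0 hw hlt u hu
    by_cases hu' : u ∈ Set.Icc a b
    · by_cases h : p + q * u < k u
      · simp only [hc]; rw [if_pos ⟨hu', h⟩]
      · exact (hck u).trans (not_lt.1 h)
    · refine (hck u).trans ?_
      by_contra hcon
      push Not at hcon
      -- both at `u` and `w` the function `k` is above the line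
      have hgen : ∀ x, x ∈ segment ℝ w u → p + q * x < k x := by
        rintro x ⟨r, s, hr, hs, hrs, rfl⟩
        have := hk.2 (show w ∈ Set.Ici (0 : ℝ) from hw0) (show u ∈ Set.Ici (0 : ℝ) from hu) hr hs hrs
        simp only [smul_eq_mul] at this ⊢
        refine lt_of_lt_of_le ?_ this
        have e : p + q * (r * w + s * u) = r * (p + q * w) + s * (p + q * u) := by
          have : p = r * p + s * p := by rw [← add_mul, hrs, one_mul]
          nlinarith
        rw [e]
        rcases hr.eq_or_lt with h | h
        · subst h
          have : s = 1 := by linarith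
          subst this; simpa using hcon
        · nlinarith
      rw [Set.mem_Icc, not_and_or, not_le, not_le] at hu'
      rcases hu' with h | h
      · have := hgen a (by rw [segment_symm, segment_eq_Icc (by linarith [hw.1])]; exact ⟨h.le, hw.1⟩)
        linarith
      · have := hgen b (by rw [segment_eq_Icc (by linarith [hw.2])]; exact ⟨hw.2, h.le⟩)
        linarith
  have hconc : ConcaveOn ℝ (Set.Ici 0) c := by
    refine ⟨convex_Ici 0, fun x hx y hy r s hr hs hrs => ?_⟩
    have hx' : 0 ≤ x := hx
    have hy' : 0 ≤ y := hy
    simp only [smul_eq_mul]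
    by_cases hw : r * x + s * y ∈ Set.Icc a b ∧ p + q * (r * x + s * y) < k (r * x + s * y)
    · have hkey := key _ (by positivity) hw.1 hw.2
      have e : c (r * x + s * y) = r * (p + q * x) + s * (p + q * y) := by
        simp only [hc]
        rw [if_pos hw]
        have : p = r * p + s * p := by rw [← add_mul, hrs, one_mul]
        nlinarith
      rw [e]
      have := hkey x hx'
      have := hkey y hy'
      gcongr
    · have e : c (r * x + s * y) = k (r * x + s * y) := by
        simp only [hc]
        rw [if_neg hw]
      rw [e]
      have h3 := hk.2 hx hy hr hs hrs
      simp only [smul_eq_mul] at h3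
      refine le_trans ?_ h3
      have := hck x
      have := hck y
      gcongr
  have hmaj : ∀ u, 0 ≤ u → f u ≤ c u := by
    intro u hu
    simp only [hc]
    split_ifs with h
    · exact hl u h.1
    · exact hf.le_cm hu
  have hfin := cm_le hconc hmaj (ha.trans hz.1)
  by_contra hcon
  push Not at hcon
  have : c z = p + q * z := by
    simp only [hc]
    rw [if_pos ⟨hz, hcon⟩]
  rw [this] at hfin
  exact absurd hfin (not_le.2 hcon)

lemma concave_tangent {k : ℝ → ℝ} (hk : ConcaveOn ℝ (Set.Ici 0) k) {s : ℝ} (hs : 0 < s) :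
    HasDerivWithinAt k (rightDeriv k s) (Set.Ioi s) s ∧
      ∀ u, 0 ≤ u → k u ≤ k s + rightDeriv k s * (u - s) := by
  have hn : ConvexOn ℝ (Set.Ici 0) (-k) := hk.neg
  have hInt : s ∈ interior (Set.Ici (0 : ℝ)) := by rw [interior_Ici]; exact hs
  have hd := hn.hasDerivWithinAt_rightDeriv_of_mem_interior hInt
  have hd' : HasDerivWithinAt k (-(derivWithin (-k) (Set.Ioi s) s)) (Set.Ioi s) s := by
    simpa using hd.neg
  have hdk : HasDerivWithinAt k (rightDeriv k s) (Set.Ioi s) s :=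
    hd'.differentiableWithinAt.hasDerivWithinAt
  have hm : rightDeriv k s = -(derivWithin (-k) (Set.Ioi s) s) :=
    hd'.derivWithin (uniqueDiffWithinAt_Ioi s)
  refine ⟨hdk, fun u hu => ?_⟩
  rcases lt_trichotomy u s with h | h | h
  · have h1 := hn.slope_le_leftDeriv_of_mem_interior (x := u) (y := s) hu hInt h
    have h2 := hn.leftDeriv_le_rightDeriv_of_mem_interior hInt
    have h3 := h1.trans h2
    rw [slope_def_field, div_le_iff₀ (by linarith)] at h3
    simp only [Pi.neg_apply] at h3
    rw [hm]
    linarith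
  · subst h; simp
  · have h1 := hn.rightDeriv_le_slope_of_mem_interior (x := s) (y := u) hInt hu h
    rw [slope_def_field, le_div_iff₀ (by linarith)] at h1
    simp only [Pi.neg_apply] at h1
    rw [hm]
    linarith

lemma GoodPath.tendsto_zero {f : ℝ → ℝ} (hf : GoodPath f) :
    Tendsto (concaveMajorant f) (𝓝[>] 0) (𝓝 (f 0)) := by
  have hc : Tendsto f (𝓝[>] 0) (𝓝 (f 0)) :=
    (hf.cont 0 (by simp)).mono_left (nhdsWithin_mono _ Set.Ioi_subset_Ici_self)
  refine tendsto_order.2 ⟨fun r hr => ?_, fun r hr => ?_⟩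
  · filter_upwards [hc.eventually (lt_mem_nhds hr), self_mem_nhdsWithin] with u hu hu0
    exact hu.trans_le (hf.le_cm (le_of_lt hu0))
  · set e := (r - f 0) / 2 with he
    have hepos : 0 < e := by simp only [he]; linarith
    have hc' := hf.cont 0 (by simp)
    have h1 : ∀ᶠ u in 𝓝[≥] (0 : ℝ), f u < f 0 + e :=
      hc'.eventually (gt_mem_nhds (by linarith))
    obtain ⟨b, hb, hbs⟩ := (mem_nhdsGE_iff_exists_Icc_subset).1 h1
    have hb0 : 0 < b := hb
    set q := |concaveMajorant f b - f 0| / b with hq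
    have hq0 : 0 ≤ q := by positivity
    have hdom : ∀ z ∈ Set.Icc 0 b, concaveMajorant f z ≤ (f 0 + e) + q * z := by
      intro z hz
      refine hf.local_dom (a := 0) (b := b) le_rfl ?_ ?_ ?_ hz
      · intro u hu
        have h2 : f u < f 0 + e := hbs hu
        have : 0 ≤ q * u := mul_nonneg hq0 hu.1
        linarith
      · rw [hf.cm_zero]; linarith
      · have : q * b = |concaveMajorant f b - f 0| := by
          simp only [hq]; field_simp
        rw [this]
        linarith [le_abs_self (concaveMajorant f b - f 0)]
    have hlim : Tendsto (fun z : ℝ => (f 0 + e) + q * z) (𝓝[>] 0) (𝓝 ((f 0 + e) + q * 0)) := by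
      apply Tendsto.mono_left _ nhdsWithin_le_nhds
      exact (Continuous.tendsto (by fun_prop) 0)
    have h3 : (f 0 + e) + q * 0 < r := by simp only [he]; linarith
    filter_upwards [hlim.eventually (gt_mem_nhds h3), Ioo_mem_nhdsGT hb0] with z hz hz'
    exact (hdom z ⟨hz'.1.le, hz'.2.le⟩).trans_lt hz

/-- Unbounded upper difference quotients at `t`. -/
def Steep (f : ℝ → ℝ) (t : ℝ) : Prop := ∀ M : ℝ, ∃ h, 0 < h ∧ f t + M * h < f (t + h)

lemma GoodPath.lt_cm {f : ℝ → ℝ} (hf : GoodPath f) {t : ℝ} (ht : 0 < t) (hs : Steep f t) :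
    f t < concaveMajorant f t := by
  refine lt_of_le_of_ne (hf.le_cm ht.le) fun heq => ?_
  obtain ⟨h, h0, hh⟩ := hs (rightDeriv (concaveMajorant f) t)
  have h1 := (concave_tangent hf.concave ht).2 (t + h) (by linarith)
  have h2 := hf.le_cm (t := t + h) (by linarith)
  rw [← heq] at h1
  have : t + h - t = h := by ring
  rw [this] at h1
  linarith

lemma GoodPath.rightDeriv_zero {f : ℝ → ℝ} (hf : GoodPath f) (hs : Steep f 0) :
    rightDeriv (concaveMajorant f) 0 = 0 := by
  apply derivWithin_zero_of_not_differentiableWithinAt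
  intro hd
  obtain ⟨h, h0, hh⟩ := hs (rightDeriv (concaveMajorant f) 0)
  have h1 := hf.concave.slope_le_rightDeriv (x := 0) (y := h) (by simp) h0.le h0 hd
  rw [slope_def_field, div_le_iff₀ (by linarith), hf.cm_zero] at h1
  have h2 := hf.le_cm h0.le
  rw [zero_add] at hh
  have h3 : rightDeriv (concaveMajorant f) 0 = derivWithin (concaveMajorant f) (Set.Ioi 0) 0 := rfl
  rw [← h3] at h1
  linarith

lemma GoodPath.locally_affine {f : ℝ → ℝ} (hf : GoodPath f) {t : ℝ} (ht : 0 < t)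
    (hlt : f t < concaveMajorant f t) :
    ∃ δ, 0 < δ ∧ δ ≤ t ∧ ∀ u, |u - t| ≤ δ → concaveMajorant f u =
      concaveMajorant f t + rightDeriv (concaveMajorant f) t * (u - t) := by
  have hk := hf.concave
  set k := concaveMajorant f with hkdef
  obtain ⟨r, hr1, hr2⟩ := exists_between hlt
  have hkc : ContinuousAt k t := by
    have := hk.continuousOn_interior
    rw [interior_Ici] at this
    exact this.continuousAt (Ioi_mem_nhds ht)
  have hfc : ContinuousAt f t := hf.cont.continuousAt (Ici_mem_nhds ht)
  have hev : ∀ᶠ u in 𝓝 t, f u < r ∧ r < k u ∧ 0 < u := by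
    filter_upwards [hfc.eventually (gt_mem_nhds hr1), hkc.eventually (lt_mem_nhds hr2),
      Ioi_mem_nhds ht] with u h1 h2 h3 using ⟨h1, h2, h3⟩
  obtain ⟨ε, hε, hball⟩ := Metric.eventually_nhds_iff.1 hev
  set δ := min (ε / 2) t with hδ
  have hδ0 : 0 < δ := lt_min (by linarith) ht
  have hδε : δ < ε := lt_of_le_of_lt (min_le_left _ _) (by linarith)
  have hδt : δ ≤ t := min_le_right _ _
  have hB : ∀ u, |u - t| ≤ δ → f u < r ∧ r < k u ∧ 0 < u := fun u hu =>
    hball (by rw [Real.dist_eq]; linarith)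
  set a := t - δ with ha
  set b := t + δ with hb
  have hab : 0 < b - a := by simp only [ha, hb]; linarith
  obtain ⟨-, hka, ha0⟩ := hB a (by simp only [ha]; rw [abs_le]; constructor <;> linarith)
  obtain ⟨-, hkb, hb0⟩ := hB b (by simp only [hb]; rw [abs_le]; constructor <;> linarith)
  have hcomb : ∀ u ∈ Set.Icc a b, (b - u) / (b - a) * k a + (u - a) / (b - a) * k b ≤ k u := by
    intro u hu
    have h1 : 0 ≤ (b - u) / (b - a) := div_nonneg (by linarith [hu.2]) hab.le
    have h2 : 0 ≤ (u - a) / (b - a) := div_nonneg (by linarith [hu.1]) hab.le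
    have h3 := hk.2 (show a ∈ Set.Ici (0 : ℝ) from ha0.le) (show b ∈ Set.Ici (0 : ℝ) from hb0.le)
      h1 h2 (by field_simp; ring)
    have h4 : ((b - u) / (b - a)) • a + ((u - a) / (b - a)) • b = u := by
      simp only [smul_eq_mul]; field_simp; ring
    rw [h4] at h3
    simpa using h3
  set q := (k b - k a) / (b - a) with hq
  set p := k a - q * a with hp
  have hchord : ∀ u, p + q * u = (b - u) / (b - a) * k a + (u - a) / (b - a) * k b := by
    intro u
    simp only [hp, hq]; field_simp; ring
  have hdom : ∀ u ∈ Set.Icc a b, k u ≤ p + q * u := by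
    intro u hu
    refine hf.local_dom ha0.le ?_ ?_ ?_ hu
    · intro v hv
      have hv' := (hB v (by
        rw [abs_le]; simp only [ha, hb, Set.mem_Icc] at hv; constructor <;> linarith [hv.1, hv.2])).1
      rw [hchord]
      have h1 : 0 ≤ (b - v) / (b - a) := div_nonneg (by linarith [hv.2]) hab.le
      have h2 : 0 ≤ (v - a) / (b - a) := div_nonneg (by linarith [hv.1]) hab.le
      have h3 : (b - v) / (b - a) + (v - a) / (b - a) = 1 := by field_simp; ring
      have h4 := mul_le_mul_of_nonneg_left hka.le h1
      have h5 := mul_le_mul_of_nonneg_left hkb.le h2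
      have h6 : (b - v) / (b - a) * r + (v - a) / (b - a) * r = r := by rw [← add_mul, h3, one_mul]
      linarith
    · simp only [hp]; linarith
    · simp only [hp, hq]
      apply le_of_eq; field_simp; ring
  have heq : ∀ u ∈ Set.Icc a b, k u = p + q * u := fun u hu =>
    le_antisymm (hdom u hu) (by rw [hchord]; exact hcomb u hu)
  have hmem : ∀ u, |u - t| ≤ δ → u ∈ Set.Icc a b := by
    intro u hu
    rw [abs_le] at hu
    simp only [ha, hb, Set.mem_Icc]; constructor <;> linarith [hu.1, hu.2]
  have ht' : k t = p + q * t := heq t (hmem t (by simp [hδ0.le]))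
  have hder : HasDerivAt k q t := by
    have h1 : HasDerivAt (fun u : ℝ => p + q * u) q t := by
      simpa using ((hasDerivAt_id t).const_mul q).const_add p
    refine h1.congr_of_eventuallyEq ?_
    filter_upwards [Metric.closedBall_mem_nhds t hδ0] with u hu
    exact heq u (hmem u (by rwa [Metric.mem_closedBall, Real.dist_eq] at hu))
  have hqd : rightDeriv k t = q := hder.hasDerivWithinAt.derivWithin (uniqueDiffWithinAt_Ioi t)
  refine ⟨δ, hδ0, hδt, fun u hu => ?_⟩
  rw [heq u (hmem u hu), ht', hqd]; ring

lemma le_of_rat_le {g : ℝ → ℝ} (hg : ContinuousOn g (Set.Ici 0)) {t c : ℝ} (ht : 0 < t)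
    (h : ∀ u : ℚ, 0 ≤ (u : ℝ) → (u : ℝ) ≤ t → g u ≤ c) {u : ℝ} (hu : u ∈ Set.Icc 0 t) :
    g u ≤ c := by
  have hcl : IsClosed (Set.Icc 0 t ∩ g ⁻¹' Set.Iic c) :=
    (hg.mono Set.Icc_subset_Ici_self).preimage_isClosed_of_isClosed isClosed_Icc isClosed_Iic
  have hsub : Set.Ioo 0 t ∩ Set.range ((↑) : ℚ → ℝ) ⊆ Set.Icc 0 t ∩ g ⁻¹' Set.Iic c := by
    rintro _ ⟨hv, v, rfl⟩
    exact ⟨⟨hv.1.le, hv.2.le⟩, h v hv.1.le hv.2.le⟩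
  have h1 : Set.Icc 0 t ⊆ closure (Set.Ioo 0 t ∩ Set.range ((↑) : ℚ → ℝ)) := by
    rw [← closure_Ioo ht.ne]
    refine closure_minimal ?_ isClosed_closure
    exact Rat.denseRange_cast.open_subset_closure_inter isOpen_Ioo
  exact ((closure_minimal hsub hcl) (h1 hu)).2

lemma GoodPath.cm_lt_iff {f : ℝ → ℝ} (hf : GoodPath f) {s t : ℝ} (hs : 0 < s) (hst : s ≤ t)
    (r : ℝ) : concaveMajorant f s < r ↔ ∃ m q : ℚ, (q : ℝ) + m * s < r ∧
      (∀ u : ℚ, 0 ≤ (u : ℝ) → (u : ℝ) ≤ t → f u ≤ q + m * u) ∧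
      concaveMajorant f t ≤ q + m * t := by
  have ht : 0 < t := hs.trans_le hst
  constructor
  · intro hlt
    obtain ⟨-, htan⟩ := concave_tangent hf.concave hs
    set k := concaveMajorant f with hk
    set d := rightDeriv k s
    set e := (r - k s) / 4 with he
    have he0 : 0 < e := by simp only [he]; linarith
    have het : 0 < e / t := div_pos he0 ht
    obtain ⟨m, hm1, hm2⟩ := exists_rat_btwn (show d - e / t < d + e / t by linarith)
    obtain ⟨q, hq1, hq2⟩ := exists_rat_btwn (show k s - d * s + e < k s - d * s + 2 * e by linarith)
    have hmt : ∀ u, 0 ≤ u → u ≤ t → |(m - d) * u| ≤ e := by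
      intro u hu hut
      rw [abs_mul, abs_of_nonneg hu]
      have : |(m : ℝ) - d| ≤ e / t := by rw [abs_le]; constructor <;> linarith
      calc |(m : ℝ) - d| * u ≤ e / t * t := by gcongr
        _ = e := by field_simp
    have hline : ∀ u, 0 ≤ u → u ≤ t → k u ≤ q + m * u := by
      intro u hu hut
      have h1 := htan u hu
      have h2 := (abs_le.1 (hmt u hu hut)).1
      nlinarith
    refine ⟨m, q, ?_, fun u hu hut => (hf.le_cm hu).trans (hline u hu hut), hline t ht.le le_rfl⟩
    have h2 := (abs_le.1 (hmt s hs.le hst)).2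
    have h4 : 4 * e = r - k s := by simp only [he]; ring
    nlinarith
  · rintro ⟨m, q, h1, h2, h3⟩
    have hg : ContinuousOn (fun u => f u - (q + m * u)) (Set.Ici 0) :=
      hf.cont.sub (by fun_prop)
    have h2' : ∀ u ∈ Set.Icc 0 t, f u ≤ q + m * u := by
      intro u hu
      have := le_of_rat_le hg ht (c := 0) (fun v hv hvt => by linarith [h2 v hv hvt]) hu
      linarith
    refine lt_of_le_of_lt (hf.local_dom (a := 0) (b := t) le_rfl h2' ?_ h3 ⟨hs.le, hst⟩) h1
    rw [hf.cm_zero]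
    exact h2' 0 ⟨le_rfl, ht.le⟩

lemma GoodPath.cm_le_iff {f : ℝ → ℝ} (hf : GoodPath f) {t : ℝ} (ht : 0 < t)
    (hlt : f t < concaveMajorant f t) (r : ℝ) : concaveMajorant f t ≤ r ↔
      ∀ u : ℚ, 0 ≤ (u : ℝ) → (u : ℝ) ≤ t →
        f u + rightDeriv (concaveMajorant f) t * (t - u) ≤ r := by
  constructor
  · intro h u hu hut
    have h1 := (concave_tangent hf.concave ht).2 u hu
    have h2 := hf.le_cm hu
    linarith
  · intro h
    by_contra hcon
    push Not at hcon
    obtain ⟨δ, hδ, hδt, haff⟩ := hf.locally_affine ht hlt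
    set k := concaveMajorant f with hk
    set m := rightDeriv k t
    have h' : ∀ u ∈ Set.Icc 0 t, f u + m * (t - u) ≤ r := fun u hu =>
      le_of_rat_le (g := fun u => f u + m * (t - u)) (hf.cont.add (by fun_prop)) ht h hu
    set e := (k t - r) / t with he
    have he0 : 0 < e := div_pos (by linarith) ht
    have het : e * t = k t - r := by simp only [he]; field_simp
    have hdom : ∀ z ∈ Set.Icc 0 t, k z ≤ (k t - (m + e) * t) + (m + e) * z := by
      intro z hz
      refine hf.local_dom (a := 0) (b := t) le_rfl ?_ ?_ ?_ hz
      · intro u hu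
        have := h' u hu
        nlinarith [mul_nonneg he0.le hu.1]
      · rw [hf.cm_zero]
        have := h' 0 ⟨le_rfl, ht.le⟩
        nlinarith
      · linarith
    have h1 := haff (t - δ) (by simp [abs_of_pos hδ])
    have h2 := hdom (t - δ) ⟨by linarith, by linarith⟩
    nlinarith

lemma concave_riemann {k : ℝ → ℝ} (hk : ConcaveOn ℝ (Set.Ici 0) k) {a s : ℝ} (ha : 0 < a)
    (has : a ≤ s) : Tendsto (fun n : ℕ => ∑ i ∈ Finset.range (n + 1),
      rightDeriv k (a + i * ((s - a) / (n + 1))) * ((s - a) / (n + 1))) atTop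
      (𝓝 (k s - k a)) := by
  have htan : ∀ x y, 0 < x → 0 < y → k y ≤ k x + rightDeriv k x * (y - x) :=
    fun x y hx hy => (concave_tangent hk hx).2 y hy.le
  set C := (rightDeriv k a - rightDeriv k s) * (s - a) with hC
  have hlim : Tendsto (fun n : ℕ => k s - k a + C * (1 / ((n : ℝ) + 1))) atTop
      (𝓝 (k s - k a)) := by
    simpa using (tendsto_one_div_add_atTop_nhds_zero_nat (𝕜 := ℝ)).const_mul C |>.const_add (k s - k a)
  refine tendsto_of_tendsto_of_tendsto_of_le_of_le tendsto_const_nhds hlim ?_ ?_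
  all_goals
    intro n
    dsimp only
    set D := (s - a) / ((n : ℝ) + 1) with hD
    have hn : (0 : ℝ) < n + 1 := by positivity
    have hD0 : 0 ≤ D := div_nonneg (by linarith) hn.le
    have hDn : ((n + 1 : ℕ) : ℝ) * D = s - a := by
      simp only [hD]; push_cast; field_simp
    have hpos : ∀ i : ℕ, 0 < a + i * D := fun i => by positivity
    have htel : ∑ i ∈ Finset.range (n + 1), (k (a + ((i + 1 : ℕ) : ℝ) * D) - k (a + i * D))
        = k s - k a := by
      rw [Finset.sum_range_sub (fun i : ℕ => k (a + (i : ℝ) * D)), hDn]; simp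
  · rw [← htel]
    refine Finset.sum_le_sum fun i _ => ?_
    have := htan _ _ (hpos i) (hpos (i + 1))
    push_cast at this ⊢
    nlinarith
  · have h1 : ∑ i ∈ Finset.range (n + 1), rightDeriv k (a + ((i + 1 : ℕ) : ℝ) * D) * D
        ≤ k s - k a := by
      rw [← htel]
      refine Finset.sum_le_sum fun i _ => ?_
      have := htan _ _ (hpos (i + 1)) (hpos i)
      push_cast at this ⊢
      nlinarith
    have h2 := Finset.sum_range_sub (fun i : ℕ => rightDeriv k (a + (i : ℝ) * D) * D) (n + 1)
    rw [Finset.sum_sub_distrib, hDn] at h2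
    have h3 : C * (1 / ((n : ℝ) + 1)) = rightDeriv k a * D - rightDeriv k s * D := by
      simp only [hC, hD]; field_simp
    have h4 : a + (s - a) = s := by ring
    simp only [Nat.cast_zero, zero_mul, add_zero, h4] at h2
    rw [h3]
    linarith

/-! ### Almost sure facts on Brownian motion -/

lemma natSigma_mono {Ω E : Type*} [MeasurableSpace E] (Y : ℝ → Ω → E) {s t : ℝ} (h : s ≤ t) :
    natSigma Y s ≤ natSigma Y t := by
  refine iSup_le fun u => ?_
  exact le_iSup (fun u : Set.Icc (0 : ℝ) t => MeasurableSpace.comap (Y u) inferInstance)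
    ⟨u, u.2.1, u.2.2.trans h⟩

lemma comap_le_natSigma {Ω E : Type*} [MeasurableSpace E] (Y : ℝ → Ω → E) {s t : ℝ} (h0 : 0 ≤ s)
    (h : s ≤ t) : MeasurableSpace.comap (Y s) inferInstance ≤ natSigma Y t :=
  le_iSup (fun u : Set.Icc (0 : ℝ) t => MeasurableSpace.comap (Y u) inferInstance) ⟨s, h0, h⟩

lemma measurable_natSigma {Ω E : Type*} [MeasurableSpace E] (Y : ℝ → Ω → E) {s t : ℝ} (h0 : 0 ≤ s)
    (h : s ≤ t) : Measurable[natSigma Y t] (Y s) :=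
  measurable_iff_comap_le.2 (comap_le_natSigma Y h0 h)

section BM

variable {Ω : Type*} [mΩ : MeasurableSpace Ω] {P : Measure Ω} [IsProbabilityMeasure P]
  {B : ℝ → Ω → ℝ}

lemma IsBrownianMotion.natSigma_le (hB : IsBrownianMotion P B) (t : ℝ) : natSigma B t ≤ mΩ :=
  iSup_le fun u => (hB.measurable u).comap_le

lemma gauss_tail (v : NNReal) {c : ℝ} (hc : 0 < c) :
    gaussianReal 0 v {x | x ≤ -c} ≤ ENNReal.ofReal (v / c ^ 2) := by
  have h := meas_ge_le_variance_div_sq (memLp_id_gaussianReal' (μ := 0) (v := v) 2 (by simp)) hc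
  rw [variance_id_gaussianReal] at h
  refine le_trans (measure_mono fun x hx => ?_) h
  have hx' : x ≤ -c := hx
  simp only [id, Set.mem_setOf_eq, integral_id_gaussianReal, sub_zero]
  rw [abs_of_nonpos (by linarith)]; linarith

lemma gauss_upper {v h : ℝ} (h0 : 0 < h) (hv : h / 2 ≤ v) :
    gaussianReal 0 (Real.toNNReal v) (Set.Iic (2 * √h)) ≤ gaussianReal 0 1 (Set.Iic 3) := by
  have hv0 : 0 < v := by linarith
  have hsv : 0 < √v := Real.sqrt_pos.2 hv0
  have hm := gaussianReal_map_const_mul (μ := 0) (v := 1) (√v)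
  have e : NNReal.mk (√v ^ 2) (sq_nonneg _) * 1 = Real.toNNReal v := by
    ext; simp [Real.sq_sqrt hv0.le, Real.coe_toNNReal _ hv0.le]
  rw [mul_zero, e] at hm
  rw [← hm, Measure.map_apply (by fun_prop) measurableSet_Iic]
  refine measure_mono fun x hx => ?_
  have hx' : √v * x ≤ 2 * √h := hx
  have h1 : 2 * √h ≤ 3 * √v := by
    have : √h ≤ 3 / 2 * √v := by
      rw [Real.sqrt_le_left (by positivity), mul_pow, Real.sq_sqrt hv0.le]; linarith
    linarith
  show x ≤ 3
  by_contra hcon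
  push Not at hcon
  nlinarith

lemma gauss_lt_one : gaussianReal 0 1 (Set.Iic (3 : ℝ)) < 1 := by
  refine lt_of_le_of_ne prob_le_one fun h => ?_
  have h1 : gaussianReal 0 1 (Set.Iic (3 : ℝ))ᶜ = 0 :=
    (prob_compl_eq_zero_iff measurableSet_Iic).2 h
  have h2 := gaussianReal_absolutelyContinuous' 0 (v := 1) one_ne_zero h1
  simp at h2

lemma IsBrownianMotion.prod_bound (hB : IsBrownianMotion P B) {t η : ℝ} (ht : 0 ≤ t) (h0 : 0 < η)
    (h1 : η ≤ 1 / 2) (k : ℕ) : ∀ N : ℕ,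
    P {ω | ∀ n < k, B (t + η ^ (N + n + 1)) ω - B (t + η ^ (N + n + 2)) ω ≤ 2 * √(η ^ (N + n + 1))}
      ≤ gaussianReal 0 1 (Set.Iic (3 : ℝ)) ^ k := by
  induction k with
  | zero => intro N; simp
  | succ k ih =>
    intro N
    have hdec : ∀ n : ℕ, η ^ (n + 1) ≤ η ^ n := fun n =>
      pow_le_pow_of_le_one h0.le (by linarith) (Nat.le_succ n)
    set E : Set Ω := {ω | B (t + η ^ (N + 1)) ω - B (t + η ^ (N + 2)) ω ≤ 2 * √(η ^ (N + 1))} with hE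
    set F : Set Ω := {ω | ∀ n < k, B (t + η ^ (N + 1 + n + 1)) ω - B (t + η ^ (N + 1 + n + 2)) ω
      ≤ 2 * √(η ^ (N + 1 + n + 1))} with hF
    have hsplit : {ω | ∀ n < k + 1, B (t + η ^ (N + n + 1)) ω - B (t + η ^ (N + n + 2)) ω
        ≤ 2 * √(η ^ (N + n + 1))} = E ∩ F := by
      ext ω
      simp only [hE, hF, Set.mem_setOf_eq, Set.mem_inter_iff]
      rw [Nat.forall_lt_succ_left]
      have e1 : ∀ n, N + (n + 1) + 1 = N + 1 + n + 1 := fun n => by ring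
      have e2 : ∀ n, N + (n + 1) + 2 = N + 1 + n + 2 := fun n => by ring
      refine and_congr Iff.rfl (forall_congr' fun n => ?_)
      rw [e1, e2]
    rw [hsplit]
    have hind := hB.incr_indep (t + η ^ (N + 2)) (t + η ^ (N + 1)) (by positivity)
      (by linarith [hdec (N + 1)])
    have hEm : MeasurableSet[MeasurableSpace.comap
        (fun ω => B (t + η ^ (N + 1)) ω - B (t + η ^ (N + 2)) ω) inferInstance] E :=
      ⟨Set.Iic (2 * √(η ^ (N + 1))), measurableSet_Iic, rfl⟩
    have hanti : ∀ a b : ℕ, a ≤ b → η ^ b ≤ η ^ a := fun a b hab =>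
      pow_le_pow_of_le_one h0.le (by linarith) hab
    have hFm : MeasurableSet[natSigma B (t + η ^ (N + 2))] F := by
      have : F = ⋂ n ∈ Set.Iio k, {ω | B (t + η ^ (N + 1 + n + 1)) ω - B (t + η ^ (N + 1 + n + 2)) ω
          ≤ 2 * √(η ^ (N + 1 + n + 1))} := by
        ext ω; simp [hF]
      rw [this]
      refine MeasurableSet.biInter (Set.to_countable _) fun n _ => ?_
      have hm1 := measurable_natSigma B (s := t + η ^ (N + 1 + n + 1)) (t := t + η ^ (N + 2))
        (by positivity) (by linarith [hanti (N + 2) (N + 1 + n + 1) (by omega)])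
      have hm2 := measurable_natSigma B (s := t + η ^ (N + 1 + n + 2)) (t := t + η ^ (N + 2))
        (by positivity) (by linarith [hanti (N + 2) (N + 1 + n + 2) (by omega)])
      exact (hm1.sub hm2) measurableSet_Iic
    rw [(Indep_iff _ _ _).1 hind E F hEm hFm, pow_succ']
    gcongr
    · have hlaw := hB.incr_law (t + η ^ (N + 2)) (t + η ^ (N + 1)) (by positivity)
        (by linarith [hdec (N + 1)])
      have : P E = P.map (fun ω => B (t + η ^ (N + 1)) ω - B (t + η ^ (N + 2)) ω)
          (Set.Iic (2 * √(η ^ (N + 1)))) := by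
        exact (Measure.map_apply ((hB.measurable _).sub (hB.measurable _)) measurableSet_Iic).symm
      rw [this, hlaw]
      refine gauss_upper (by positivity) ?_
      have e : η ^ (N + 2) = η * η ^ (N + 1) := by ring
      have : 0 < η ^ (N + 1) := by positivity
      nlinarith
    · exact ih (N + 1)

lemma IsBrownianMotion.flat_bound (hB : IsBrownianMotion P B) {t η : ℝ} (ht : 0 ≤ t) (h0 : 0 < η)
    (h1 : η ≤ 1 / 2) (M : ℕ) (hM : (M : ℝ) ^ 2 * η ≤ 1) (k : ℕ) :
    P {ω | ∀ h, 0 < h → B (t + h) ω ≤ B t ω + M * h}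
      ≤ gaussianReal 0 1 (Set.Iic (3 : ℝ)) ^ k + k * ENNReal.ofReal η := by
  set E : Set Ω := {ω | ∀ n < k, B (t + η ^ (0 + n + 1)) ω - B (t + η ^ (0 + n + 2)) ω
    ≤ 2 * √(η ^ (0 + n + 1))} with hE
  set D : ℕ → Set Ω := fun n => {ω | B (t + η ^ (n + 2)) ω - B t ω ≤ -√(η ^ (n + 1))} with hD
  have hsub : {ω | ∀ h, 0 < h → B (t + h) ω ≤ B t ω + M * h} ⊆ E ∪ ⋃ n ∈ Finset.range k, D n := by
    intro ω hω
    by_cases hd : ω ∈ ⋃ n ∈ Finset.range k, D n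
    · exact Or.inr hd
    · left
      intro n hn
      simp only [Set.mem_iUnion, Finset.mem_range, not_exists, hD, Set.mem_setOf_eq, not_le] at hd
      have h2 := hd n hn
      have hp : 0 < η ^ (n + 1) := by positivity
      have h3 := hω (η ^ (n + 1)) hp
      have h4 : M * η ^ (n + 1) ≤ √(η ^ (n + 1)) := by
        apply Real.le_sqrt_of_sq_le
        have : η ^ (n + 1) ≤ η := by
          simpa using pow_le_pow_of_le_one h0.le (by linarith : η ≤ 1) (show 1 ≤ n + 1 by omega)
        have hM0 : (0 : ℝ) ≤ (M : ℝ) ^ 2 := by positivity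
        nlinarith [mul_le_mul_of_nonneg_left this hM0]
      rw [zero_add]
      linarith
  refine (measure_mono hsub).trans ((measure_union_le _ _).trans ?_)
  gcongr
  · exact hB.prod_bound ht h0 h1 k 0
  · refine (measure_biUnion_finset_le _ _).trans ?_
    have : ∀ n ∈ Finset.range k, P (D n) ≤ ENNReal.ofReal η := by
      intro n _
      have hlaw := hB.incr_law t (t + η ^ (n + 2)) ht (by linarith [pow_pos h0 (n + 2)])
      have e : P (D n) = P.map (fun ω => B (t + η ^ (n + 2)) ω - B t ω)
          {x | x ≤ -√(η ^ (n + 1))} := by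
        exact (Measure.map_apply ((hB.measurable _).sub (hB.measurable _)) measurableSet_Iic).symm
      rw [e, hlaw]
      refine (gauss_tail _ (Real.sqrt_pos.2 (by positivity))).trans ?_
      apply ENNReal.ofReal_le_ofReal
      rw [Real.sq_sqrt (by positivity), add_sub_cancel_left, Real.coe_toNNReal _ (by positivity)]
      apply le_of_eq
      field_simp
      ring
    refine (Finset.sum_le_sum this).trans ?_
    simp

lemma IsBrownianMotion.flat_null (hB : IsBrownianMotion P B) {t : ℝ} (ht : 0 ≤ t) (M : ℕ) :
    P {ω | ∀ h, 0 < h → B (t + h) ω ≤ B t ω + M * h} = 0 := by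
  set A := {ω | ∀ h, 0 < h → B (t + h) ω ≤ B t ω + M * h}
  have hη : Tendsto (fun j : ℕ => 1 / ((j : ℝ) + 1)) atTop (𝓝 0) :=
    tendsto_one_div_add_atTop_nhds_zero_nat
  have hk : ∀ k : ℕ, P A ≤ gaussianReal 0 1 (Set.Iic (3 : ℝ)) ^ k := by
    intro k
    have hlim : Tendsto (fun j : ℕ => gaussianReal 0 1 (Set.Iic (3 : ℝ)) ^ k +
        k * ENNReal.ofReal (1 / ((j : ℝ) + 1))) atTop
        (𝓝 (gaussianReal 0 1 (Set.Iic (3 : ℝ)) ^ k + k * ENNReal.ofReal 0)) := by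
      refine tendsto_const_nhds.add ?_
      exact ENNReal.Tendsto.const_mul (ENNReal.tendsto_ofReal hη) (Or.inr (by simp))
    rw [ENNReal.ofReal_zero, mul_zero, add_zero] at hlim
    refine ge_of_tendsto hlim ?_
    have hM : Tendsto (fun j : ℕ => (M : ℝ) ^ 2 * (1 / ((j : ℝ) + 1))) atTop (𝓝 ((M : ℝ) ^ 2 * 0)) :=
      hη.const_mul _
    rw [mul_zero] at hM
    filter_upwards [hη.eventually (ge_mem_nhds (show (0 : ℝ) < 1 / 2 by norm_num)),
      hM.eventually (ge_mem_nhds (show (0 : ℝ) < 1 by norm_num))] with j h1 h2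
    exact hB.flat_bound ht (by positivity) h1 M h2 k
  have h0 := ENNReal.tendsto_pow_atTop_nhds_zero_of_lt_one gauss_lt_one
  exact le_antisymm (ge_of_tendsto' h0 hk) bot_le

lemma IsBrownianMotion.steep (hB : IsBrownianMotion P B) {t : ℝ} (ht : 0 ≤ t) :
    ∀ᵐ ω ∂P, Steep (fun u => B u ω) t := by
  have h : ∀ᵐ ω ∂P, ∀ M : ℕ, ¬ ∀ h, 0 < h → B (t + h) ω ≤ B t ω + M * h := by
    rw [ae_all_iff]
    intro M
    rw [ae_iff]
    simpa using hB.flat_null ht M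
  filter_upwards [h] with ω hω M
  obtain ⟨n, hn⟩ := exists_nat_ge M
  have h1 := hω n
  push Not at h1
  obtain ⟨h, h0, hh⟩ := h1
  refine ⟨h, h0, lt_of_le_of_lt ?_ hh⟩
  gcongr

end BM

section BM2

variable {Ω : Type*} [mΩ : MeasurableSpace Ω] {P : Measure Ω} [IsProbabilityMeasure P]
  {B : ℝ → Ω → ℝ}

lemma IsBrownianMotion.law (hB : IsBrownianMotion P B) {s : ℝ} (hs : 0 ≤ s) :
    P.map (B s) = gaussianReal 0 (Real.toNNReal s) := by
  have h := hB.incr_law 0 s le_rfl hs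
  rw [sub_zero] at h
  rw [← h]
  refine Measure.map_congr ?_
  filter_upwards [hB.init] with ω hω
  rw [hω, sub_zero]

lemma IsBrownianMotion.memLp (hB : IsBrownianMotion P B) {s : ℝ} (hs : 0 ≤ s) :
    MemLp (B s) 2 P := by
  have h := memLp_id_gaussianReal' (μ := 0) (v := Real.toNNReal s) 2 (by simp)
  rw [← hB.law hs] at h
  exact (memLp_map_measure_iff (by fun_prop) (hB.measurable s).aemeasurable).1 h

lemma IsBrownianMotion.integral_sq (hB : IsBrownianMotion P B) {s : ℝ} (hs : 0 ≤ s) :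
    ∫ ω, B s ω ^ 2 ∂P = s := by
  have h1 : ∫ ω, B s ω ^ 2 ∂P = ∫ x, x ^ 2 ∂(P.map (B s)) := by
    rw [integral_map (hB.measurable s).aemeasurable (by fun_prop)]
  have h2 := variance_id_gaussianReal (μ := 0) (v := Real.toNNReal s)
  rw [variance_of_integral_eq_zero (by fun_prop) (by simp)] at h2
  rw [h1, hB.law hs]
  simpa [Real.coe_toNNReal _ hs] using h2

lemma IsBrownianMotion.integral_incr (hB : IsBrownianMotion P B) {s t : ℝ} (hs : 0 ≤ s)
    (hst : s ≤ t) : ∫ ω, (B t ω - B s ω) ∂P = 0 := by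
  have h1 : ∫ ω, (B t ω - B s ω) ∂P = ∫ x, x ∂(P.map (fun ω => B t ω - B s ω)) := by
    have hm : Measurable (fun ω => B t ω - B s ω) := (hB.measurable t).sub (hB.measurable s)
    rw [integral_map hm.aemeasurable (by fun_prop)]
  rw [h1, hB.incr_law s t hs hst, integral_id_gaussianReal]

/-- The filtration along the grid of mesh `d`. -/
def gridFil (hB : IsBrownianMotion P B) (d : ℝ) (hd : 0 ≤ d) : Filtration ℕ mΩ where
  seq i := natSigma B (i * d)
  mono' i j hij := natSigma_mono B (by gcongr)
  le' i := hB.natSigma_le _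

lemma IsBrownianMotion.martingale (hB : IsBrownianMotion P B) (d : ℝ) (hd : 0 ≤ d) :
    Martingale (fun (i : ℕ) => B (i * d)) (gridFil hB d hd) P := by
  have hInt : ∀ i : ℕ, Integrable (B (i * d)) P := fun i =>
    (hB.memLp (by positivity)).integrable (by norm_num)
  have had : ∀ i : ℕ, StronglyMeasurable[gridFil hB d hd i] (B (i * d)) := fun i =>
    (measurable_natSigma B (by positivity) le_rfl).stronglyMeasurable
  refine martingale_nat had hInt fun i => ?_
  have h0 : (0 : ℝ) ≤ i * d := by positivity
  have h1 : (i : ℝ) * d ≤ ((i + 1 : ℕ) : ℝ) * d := by gcongr; simp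
  have hm : Measurable (fun ω => B (((i + 1 : ℕ) : ℝ) * d) ω - B (i * d) ω) :=
    (hB.measurable _).sub (hB.measurable _)
  have hce := condExp_indep_eq (μ := P) (m₁ := MeasurableSpace.comap
    (fun ω => B (((i + 1 : ℕ) : ℝ) * d) ω - B (i * d) ω) inferInstance)
    (m₂ := natSigma B (i * d)) (f := fun ω => B (((i + 1 : ℕ) : ℝ) * d) ω - B (i * d) ω)
    hm.comap_le (hB.natSigma_le _)
    (comap_measurable _).stronglyMeasurable (hB.incr_indep _ _ h0 h1)
  rw [hB.integral_incr h0 h1] at hce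
  have hsub := condExp_sub (hInt (i + 1)) (hInt i) (natSigma B (i * d))
  have hself := condExp_of_stronglyMeasurable (hB.natSigma_le (i * d)) (had i) (hInt i)
  rw [hself] at hsub
  have hce' : P[B (((i + 1 : ℕ) : ℝ) * d) - B (i * d) | natSigma B (i * d)] =ᵐ[P] fun _ => 0 := hce
  have hgoal : B (i * d) =ᵐ[P] P[B (((i + 1 : ℕ) : ℝ) * d) | natSigma B (i * d)] := by
    filter_upwards [hsub, hce'] with ω h2 h3
    rw [h3] at h2
    simp only [Pi.sub_apply] at h2
    linarith
  exact hgoal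

lemma IsBrownianMotion.grid_bound (hB : IsBrownianMotion P B) (n j : ℕ) :
    P {ω | ∃ i : ℕ, i ≤ 2 ^ j ∧ (4 : ℝ) ^ n ≤ B (i * ((4 : ℝ) ^ n / 2 ^ j)) ω}
      ≤ ENNReal.ofReal ((1 / 2) ^ n) := by
  set d : ℝ := (4 : ℝ) ^ n / 2 ^ j with hd
  have hd0 : 0 ≤ d := by positivity
  have hsub := ((hB.martingale d hd0).submartingale).pos
  have hnn : (0 : ℕ → Ω → ℝ) ≤ (fun (i : ℕ) => B (i * d))⁺ := posPart_nonneg _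
  have hmax := maximal_ineq hsub hnn (ε := (4 : NNReal) ^ n) (2 ^ j)
  set S := {ω | (((4 : NNReal) ^ n : NNReal) : ℝ) ≤ (Finset.range (2 ^ j + 1)).sup'
    Finset.nonempty_range_add_one fun k => ((fun (i : ℕ) => B (i * d))⁺) k ω} with hS
  have hsubset : {ω | ∃ i : ℕ, i ≤ 2 ^ j ∧ (4 : ℝ) ^ n ≤ B (i * d) ω} ⊆ S := by
    rintro ω ⟨i, hi, hle⟩
    simp only [hS, Set.mem_setOf_eq, Finset.le_sup'_iff]
    refine ⟨i, Finset.mem_range.2 (by omega), ?_⟩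
    push_cast
    refine hle.trans ?_
    exact le_posPart (B (i * d) ω)
  have hT : (((2 ^ j : ℕ) : ℝ)) * d = 4 ^ n := by
    simp only [hd]; push_cast; field_simp
  have hle : ∫ ω in S, ((fun (i : ℕ) => B (i * d))⁺) (2 ^ j) ω ∂P ≤ 2 ^ n := by
    have hpt : ∀ ω, ((fun (i : ℕ) => B (i * d))⁺) (2 ^ j) ω
        ≤ (B (4 ^ n) ω ^ 2 / 2 ^ n + 2 ^ n) / 2 := by
      intro ω
      have e : ((fun (i : ℕ) => B (i * d))⁺) (2 ^ j) ω = max (B (4 ^ n) ω) 0 := by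
        rw [← hT]; rfl
      rw [e]
      have h2 : (0 : ℝ) < 2 ^ n := by positivity
      have key : ∀ x : ℝ, (x ^ 2 / 2 ^ n + 2 ^ n) / 2 - x = (x - 2 ^ n) ^ 2 / (2 * 2 ^ n) := by
        intro x; field_simp; ring
      refine max_le ?_ (by positivity)
      have := key (B (4 ^ n) ω)
      have h3 : 0 ≤ (B (4 ^ n) ω - 2 ^ n) ^ 2 / (2 * 2 ^ n) := by positivity
      linarith
    have hint2 : Integrable (fun ω => (B (4 ^ n) ω ^ 2 / 2 ^ n + 2 ^ n) / 2) P := by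
      have := (hB.memLp (s := 4 ^ n) (by positivity)).integrable_sq
      exact ((this.div_const _).add (integrable_const _)).div_const _
    have hint1 : Integrable (((fun (i : ℕ) => B (i * d))⁺) (2 ^ j)) P := hsub.integrable _
    calc ∫ ω in S, ((fun (i : ℕ) => B (i * d))⁺) (2 ^ j) ω ∂P
        ≤ ∫ ω, ((fun (i : ℕ) => B (i * d))⁺) (2 ^ j) ω ∂P :=
          setIntegral_le_integral hint1 (ae_of_all _ fun ω => hnn _ ω)
      _ ≤ ∫ ω, (B (4 ^ n) ω ^ 2 / 2 ^ n + 2 ^ n) / 2 ∂P := integral_mono hint1 hint2 hpt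
      _ = 2 ^ n := by
          have h3 := (hB.memLp (s := 4 ^ n) (by positivity)).integrable_sq
          rw [integral_div, integral_add (h3.div_const _) (integrable_const _), integral_div,
            hB.integral_sq (by positivity)]
          have h4 : (4 : ℝ) ^ n = 2 ^ n * 2 ^ n := by rw [← mul_pow]; norm_num
          rw [h4]
          simp
  have h1 := (mul_le_mul_right (measure_mono (μ := P) hsubset) (((4 : NNReal) ^ n : NNReal) : ENNReal)).trans
    (hmax.trans (ENNReal.ofReal_le_ofReal hle))
  have h4 : (((4 : NNReal) ^ n : NNReal) : ENNReal) = ENNReal.ofReal (4 ^ n) := by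
    rw [ENNReal.ofReal_pow (by norm_num)]; simp
  rw [h4] at h1
  have h5 : ENNReal.ofReal (2 ^ n) = ENNReal.ofReal (4 ^ n) * ENNReal.ofReal ((1 / 2) ^ n) := by
    rw [← ENNReal.ofReal_mul (by positivity), ← mul_pow]; norm_num
  rw [h5] at h1
  exact (ENNReal.mul_le_mul_iff_right (by simp) (by simp)).1 h1

lemma IsBrownianMotion.dyadic_bound (hB : IsBrownianMotion P B) (n : ℕ) :
    P {ω | ∃ j i : ℕ, i ≤ 2 ^ j ∧ (4 : ℝ) ^ n ≤ B (i * ((4 : ℝ) ^ n / 2 ^ j)) ω}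
      ≤ ENNReal.ofReal ((1 / 2) ^ n) := by
  rw [Set.setOf_exists, Monotone.measure_iUnion]
  · exact iSup_le fun j => hB.grid_bound n j
  · refine monotone_nat_of_le_succ fun j => ?_
    rintro ω ⟨i, hi, hle⟩
    refine ⟨2 * i, by rw [pow_succ]; omega, ?_⟩
    have : ((2 * i : ℕ) : ℝ) * ((4 : ℝ) ^ n / 2 ^ (j + 1)) = i * ((4 : ℝ) ^ n / 2 ^ j) := by
      push_cast; rw [pow_succ]; field_simp
    rw [this]; exact hle

lemma IsBrownianMotion.good (hB : IsBrownianMotion P B) : ∀ᵐ ω ∂P, GoodPath (fun u => B u ω) := by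
  have hsum : ∑' n : ℕ, P {ω | ∃ j i : ℕ, i ≤ 2 ^ j ∧ (4 : ℝ) ^ n ≤ B (i * ((4 : ℝ) ^ n / 2 ^ j)) ω}
      ≠ ⊤ := by
    refine ne_top_of_le_ne_top ?_ (ENNReal.tsum_le_tsum fun n => hB.dyadic_bound n)
    have hs : Summable (fun n : ℕ => ((1 : ℝ) / 2) ^ n) := summable_geometric_two
    exact hs.tsum_ofReal_ne_top
  filter_upwards [hB.cont, ae_eventually_notMem hsum] with ω hc hev
  refine ⟨hc, ?_⟩
  obtain ⟨n₀, hn₀⟩ := eventually_atTop.1 hev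
  have hbd : ∀ n ≥ n₀, ∀ u ∈ Set.Icc (0 : ℝ) (4 ^ n), B u ω ≤ 4 ^ n := by
    intro n hn u hu
    have hT : (0 : ℝ) < 4 ^ n := by positivity
    have h1 := hn₀ n hn
    simp only [Set.mem_setOf_eq, not_exists, not_and, not_le] at h1
    have hu0 : 0 ≤ u / 4 ^ n := div_nonneg hu.1 hT.le
    have hfl : Tendsto (fun j : ℕ => (⌊u / 4 ^ n * (2 : ℝ) ^ j⌋₊ : ℝ) / (2 : ℝ) ^ j) atTop
        (𝓝 (u / 4 ^ n)) :=
      (tendsto_nat_floor_mul_div_atTop hu0).comp (tendsto_pow_atTop_atTop_of_one_lt (by norm_num))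
    have hfl2 : Tendsto (fun j : ℕ => (⌊u / 4 ^ n * (2 : ℝ) ^ j⌋₊ : ℝ) * (4 ^ n / (2 : ℝ) ^ j)) atTop
        (𝓝 u) := by
      have := hfl.mul_const ((4 : ℝ) ^ n)
      rw [div_mul_cancel₀ _ hT.ne'] at this
      refine this.congr fun j => ?_
      ring
    have hfl4 : Tendsto (fun j : ℕ => (⌊u / 4 ^ n * (2 : ℝ) ^ j⌋₊ : ℝ) * (4 ^ n / (2 : ℝ) ^ j)) atTop
        (𝓝[Set.Ici 0] u) :=
      tendsto_nhdsWithin_iff.2 ⟨hfl2, Eventually.of_forall fun j => by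
        simp only [Set.mem_Ici]; positivity⟩
    have hlim := (hc u hu.1).tendsto.comp hfl4
    refine le_of_tendsto' hlim fun j => ?_
    refine (h1 j _ ?_).le
    refine Nat.floor_le_of_le ?_
    push_cast
    have : u / 4 ^ n ≤ 1 := (div_le_one hT).2 hu.2
    have h2 : (0 : ℝ) < 2 ^ j := by positivity
    nlinarith
  refine ⟨4 ^ n₀, 4, fun u hu => ?_⟩
  have hp : (0 : ℝ) < 4 ^ n₀ := by positivity
  rcases le_total u (4 ^ n₀) with h | h
  · have := hbd n₀ le_rfl u ⟨hu, h⟩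
    linarith
  · have h1 : (1 : ℝ) ≤ u := le_trans (one_le_pow₀ (by norm_num)) h
    obtain ⟨n, hn1, hn2⟩ := exists_nat_pow_near h1 (show (1 : ℝ) < 4 by norm_num)
    have hnn : n₀ ≤ n + 1 := by
      by_contra hcon
      push Not at hcon
      have : (4 : ℝ) ^ (n + 1) ≤ 4 ^ n₀ := pow_le_pow_right₀ (by norm_num) hcon.le
      linarith
    have := hbd (n + 1) hnn u ⟨hu, hn2.le⟩
    rw [pow_succ] at this
    linarith

end BM2

/-! ### Measurability modulo null sets -/

section Final

variable {Ω : Type*} {m m₁ m₂ : MeasurableSpace Ω} [mΩ : MeasurableSpace Ω]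

/-- Sets that agree with an `m`-measurable set up to a `P`-null set. -/
@[reducible]
def NS {Ω : Type*} [mΩ : MeasurableSpace Ω] (P : Measure Ω) (m : MeasurableSpace Ω) : MeasurableSpace Ω :=
  eventuallyMeasurableSpace m (ae P)

variable {P : Measure Ω}

lemma le_NS : m ≤ NS P m := fun s hs => ⟨s, hs, EventuallyEq.refl _ _⟩

lemma NS_trans (h : m₁ ≤ NS P m₂) : NS P m₁ ≤ NS P m₂ := by
  rintro s ⟨u, hu, hsu⟩
  obtain ⟨v, hv, huv⟩ := h u hu
  exact ⟨v, hv, hsu.trans huv⟩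

lemma sigmaLe (h : m₁ ≤ NS P m₂) : SigmaLeModNull P m₁ m₂ := by
  intro A hA
  obtain ⟨A', hA', hae⟩ := h A hA
  exact ⟨A', hA', measure_symmDiff_eq_zero_iff.2 hae⟩

lemma NS_set_congr {s u : Set Ω} (hu : MeasurableSet[m] u) (h : ∀ᵐ ω ∂P, ω ∈ s ↔ ω ∈ u) :
    MeasurableSet[NS P m] s :=
  ⟨u, hu, eventuallyEq_set.2 h⟩

lemma NS_congr {f g : Ω → ℝ} (hf : Measurable[NS P m] f) (h : g =ᵐ[P] f) :
    Measurable[NS P m] g :=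
  EventuallyMeasurable.congr (m := m) (l := ae P) hf h

lemma NS_lim {f : ℕ → Ω → ℝ} {g : Ω → ℝ} (hf : ∀ n, Measurable[NS P m] (f n))
    (h : ∀ᵐ ω ∂P, Tendsto (fun n => f n ω) atTop (𝓝 (g ω))) : Measurable[NS P m] g := by
  have h1 : Measurable[NS P m] (fun ω => limsup (fun n => f n ω) atTop) :=
    Measurable.limsup hf
  refine NS_congr h1 ?_
  filter_upwards [h] with ω hω
  exact hω.limsup_eq.symm

variable [IsProbabilityMeasure P] {B : ℝ → Ω → ℝ}

lemma claimA (hB : IsBrownianMotion P B) {s t : ℝ} (hs : 0 ≤ s) (hst : s ≤ t)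
    (h1 : ∀ u, 0 ≤ u → u ≤ t → Measurable[m] (B u)) (h2 : Measurable[m] (Kproc B t)) :
    Measurable[NS P m] (Kproc B s) := by
  rcases hs.eq_or_lt with h | h
  · subst h
    refine NS_congr ((h1 0 le_rfl hst).mono le_NS le_rfl) ?_
    filter_upwards [hB.good] with ω hω
    exact hω.cm_zero
  · refine measurable_of_Iio (mδ := NS P m) fun r => ?_
    refine NS_set_congr (u := ⋃ (a : ℚ) (q : ℚ) (_ : (q : ℝ) + a * s < r),
      ((⋂ (u : ℚ) (_ : 0 ≤ (u : ℝ) ∧ (u : ℝ) ≤ t), {ω | B u ω ≤ q + a * u}) ∩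
        {ω | Kproc B t ω ≤ q + a * t})) ?_ ?_
    · refine MeasurableSet.iUnion fun a => MeasurableSet.iUnion fun q => MeasurableSet.iUnion fun _ =>
        MeasurableSet.inter ?_ (h2 measurableSet_Iic)
      exact MeasurableSet.iInter fun u => MeasurableSet.iInter fun hu =>
        (h1 u hu.1 hu.2) measurableSet_Iic
    · filter_upwards [hB.good] with ω hω
      have := hω.cm_lt_iff h hst r
      simp only [Set.mem_preimage, Set.mem_Iio, Set.mem_iUnion, Set.mem_inter_iff, Set.mem_iInter,
        Set.mem_setOf_eq, exists_prop, and_imp]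
      exact this

lemma claimB (hB : IsBrownianMotion P B) {t : ℝ} (ht : 0 ≤ t)
    (h1 : ∀ u, 0 ≤ u → u ≤ t → Measurable[NS P m] (Kproc B u)) :
    Measurable[NS P m] (Kslope B t) := by
  rcases ht.eq_or_lt with h | h
  · subst h
    refine NS_congr (f := fun _ => 0) (@measurable_const _ _ _ (NS P m) _) ?_
    filter_upwards [hB.good, hB.steep le_rfl] with ω hω hst
    exact hω.rightDeriv_zero hst
  · have hd : ∀ n : ℕ, 0 < t / ((n : ℝ) + 1) := fun n => by positivity
    refine NS_lim (f := fun n ω => (Kproc B t ω - Kproc B (t - t / ((n : ℝ) + 1)) ω)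
      / (t / ((n : ℝ) + 1))) (fun n => ?_) ?_
    · have h2 := h1 t ht le_rfl
      have h3 := h1 (t - t / ((n : ℝ) + 1)) (by
        have : t / ((n : ℝ) + 1) ≤ t := div_le_self ht (by linarith [n.cast_nonneg (α := ℝ)])
        linarith) (by linarith [hd n])
      exact (h2.sub h3).div_const _
    · filter_upwards [hB.good, hB.steep ht] with ω hω hst
      obtain ⟨δ, hδ, hδt, haff⟩ := hω.locally_affine h (hω.lt_cm h hst)
      have hlim : Tendsto (fun n : ℕ => t / ((n : ℝ) + 1)) atTop (𝓝 0) := by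
        have := (tendsto_one_div_add_atTop_nhds_zero_nat (𝕜 := ℝ)).const_mul t
        simpa [div_eq_mul_inv] using this
      refine tendsto_const_nhds.congr' ?_
      filter_upwards [hlim.eventually (ge_mem_nhds hδ)] with n hn
      have h4 := haff (t - t / ((n : ℝ) + 1)) (by
        rw [sub_sub_cancel_left, abs_neg, abs_of_pos (hd n)]; exact hn)
      have h5 : Kproc B (t - t / ((n : ℝ) + 1)) ω
        = Kproc B t ω + Kslope B t ω * (t - t / ((n : ℝ) + 1) - t) := h4
      rw [h5, eq_div_iff (hd n).ne']
      ring

lemma claimC (hB : IsBrownianMotion P B) {t : ℝ} (ht : 0 ≤ t)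
    (h1 : ∀ u, 0 ≤ u → u ≤ t → Measurable[m] (B u)) (h2 : Measurable[m] (Kslope B t)) :
    Measurable[NS P m] (Kproc B t) := by
  rcases ht.eq_or_lt with h | h
  · subst h
    refine NS_congr ((h1 0 le_rfl le_rfl).mono le_NS le_rfl) ?_
    filter_upwards [hB.good] with ω hω
    exact hω.cm_zero
  · refine measurable_of_Iic (mδ := NS P m) fun r => ?_
    refine NS_set_congr (u := ⋂ (u : ℚ) (_ : 0 ≤ (u : ℝ) ∧ (u : ℝ) ≤ t),
      {ω | B u ω + Kslope B t ω * (t - u) ≤ r}) ?_ ?_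
    · refine MeasurableSet.iInter fun u => MeasurableSet.iInter fun hu => ?_
      exact ((h1 u hu.1 hu.2).add (h2.mul_const _)) measurableSet_Iic
    · filter_upwards [hB.good, hB.steep ht] with ω hω hst
      have := hω.cm_le_iff h (hω.lt_cm h hst) r
      simp only [Set.mem_preimage, Set.mem_Iic, Set.mem_iInter, Set.mem_setOf_eq, and_imp]
      exact this

lemma claimE (hB : IsBrownianMotion P B) {t : ℝ}
    (h1 : ∀ u, 0 ≤ u → u ≤ t → Measurable[NS P m] (Kslope B u)) {s : ℝ} (hs : 0 ≤ s)
    (hst : s ≤ t) : Measurable[NS P m] (Kproc B s) := by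
  rcases hs.eq_or_lt with h | h
  · subst h
    refine NS_congr (f := fun _ => 0) (@measurable_const _ _ _ (NS P m) _) ?_
    filter_upwards [hB.good, hB.init] with ω hω h0
    exact hω.cm_zero.trans h0
  · have step : ∀ a, 0 < a → a ≤ s → Measurable[NS P m] (fun ω => Kproc B s ω - Kproc B a ω) := by
      intro a ha has
      refine NS_lim (f := fun n ω => ∑ i ∈ Finset.range (n + 1),
        Kslope B (a + i * ((s - a) / (n + 1))) ω * ((s - a) / (n + 1))) (fun n => ?_) ?_
      · refine Finset.measurable_fun_sum _ fun i hi => ?_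
        have hD : 0 ≤ (s - a) / ((n : ℝ) + 1) := div_nonneg (by linarith) (by positivity)
        have hi' : (i : ℝ) ≤ n + 1 := by
          have := Finset.mem_range.1 hi
          exact_mod_cast this.le
        have hle : i * ((s - a) / ((n : ℝ) + 1)) ≤ s - a := by
          calc i * ((s - a) / ((n : ℝ) + 1)) ≤ (n + 1) * ((s - a) / ((n : ℝ) + 1)) := by gcongr
            _ = s - a := by field_simp
        exact (h1 _ (by positivity) (by linarith)).mul_const _
      · filter_upwards [hB.good] with ω hω
        exact concave_riemann hω.concave ha has
    refine NS_lim (f := fun n ω => Kproc B s ω - Kproc B (s / ((n : ℝ) + 1)) ω) (fun n => ?_) ?_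
    · exact step _ (by positivity) (div_le_self hs (by linarith [n.cast_nonneg (α := ℝ)]))
    · filter_upwards [hB.good, hB.init] with ω hω h0
      have hlim : Tendsto (fun n : ℕ => s / ((n : ℝ) + 1)) atTop (𝓝[>] 0) := by
        refine tendsto_nhdsWithin_iff.2 ⟨?_, Eventually.of_forall fun n => ?_⟩
        · have := (tendsto_one_div_add_atTop_nhds_zero_nat (𝕜 := ℝ)).const_mul s
          simpa [div_eq_mul_inv] using this
        · simp only [Set.mem_Ioi]; positivity
      have h3 := hω.tendsto_zero.comp hlim
      simp only [h0] at h3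
      have h4 := h3.const_sub (Kproc B s ω)
      rw [sub_zero] at h4
      exact h4

lemma natSigma_le_of {Y : ℝ → Ω → ℝ} {t : ℝ} (h : ∀ u, 0 ≤ u → u ≤ t → Measurable[m] (Y u)) :
    natSigma Y t ≤ m :=
  iSup_le fun u => measurable_iff_comap_le.1 (h u u.2.1 u.2.2)

end Final

/-- For every `t ≥ 0`, up to `P`-negligible sets:
`𝓕_t^{K-B} ∨ 𝓕_t^{K'} = 𝓕_t^B ∨ 𝓕_t^K = 𝓕_t^B ∨ σ(K(t)) = 𝓕_t^B ∨ σ(K'(t))`, and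
`𝓕_t^X ∨ σ(K(t)) ∨ σ(K'(t)) ⊆ 𝓕_t^B ∨ 𝓕_t^K`. -/
theorem filtration_identities {Ω : Type*} [MeasurableSpace Ω]
    (P : Measure Ω) [IsProbabilityMeasure P] (B : ℝ → Ω → ℝ)
    (hB : IsBrownianMotion P B) (t : ℝ) (ht : 0 ≤ t) :
    SigmaEqModNull P
      (natSigma (fun u ω => Kproc B u ω - B u ω) t ⊔ natSigma (Kslope B) t)
      (natSigma B t ⊔ natSigma (Kproc B) t) ∧
    SigmaEqModNull P
      (natSigma B t ⊔ natSigma (Kproc B) t)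
      (natSigma B t ⊔ MeasurableSpace.comap (Kproc B t) inferInstance) ∧
    SigmaEqModNull P
      (natSigma B t ⊔ MeasurableSpace.comap (Kproc B t) inferInstance)
      (natSigma B t ⊔ MeasurableSpace.comap (Kslope B t) inferInstance) ∧
    SigmaLeModNull P
      (natSigma (Xproc B) t ⊔ MeasurableSpace.comap (Kproc B t) inferInstance
        ⊔ MeasurableSpace.comap (Kslope B t) inferInstance)
      (natSigma B t ⊔ natSigma (Kproc B) t) := by
  have mB : ∀ {m : MeasurableSpace Ω}, natSigma B t ≤ m → ∀ u, 0 ≤ u → u ≤ t →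
      Measurable[m] (B u) := fun h u h0 hu => (measurable_natSigma B h0 hu).mono h le_rfl
  have mK : ∀ u, 0 ≤ u → u ≤ t → Measurable[natSigma B t ⊔ natSigma (Kproc B) t] (Kproc B u) :=
    fun u h0 hu => (measurable_natSigma (Kproc B) h0 hu).mono le_sup_right le_rfl
  have mK' : ∀ u, 0 ≤ u → u ≤ t →
      Measurable[NS P (natSigma B t ⊔ natSigma (Kproc B) t)] (Kproc B u) :=
    fun u h0 hu => (mK u h0 hu).mono le_NS le_rfl
  have mB' : ∀ u, 0 ≤ u → u ≤ t →
      Measurable[NS P (natSigma B t ⊔ natSigma (Kproc B) t)] (B u) :=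
    mB (le_sup_left.trans le_NS)
  have mS' : ∀ u, 0 ≤ u → u ≤ t →
      Measurable[NS P (natSigma B t ⊔ natSigma (Kproc B) t)] (Kslope B u) :=
    fun u h0 hu => claimB hB h0 fun v hv hvu => mK' v hv (hvu.trans hu)
  -- second identity
  have h2 : natSigma B t ⊔ natSigma (Kproc B) t ≤
      NS P (natSigma B t ⊔ MeasurableSpace.comap (Kproc B t) inferInstance) := by
    refine sup_le (le_sup_left.trans le_NS) (natSigma_le_of fun u h0 hu => ?_)
    exact claimA hB h0 hu (mB le_sup_left)
      (measurable_iff_comap_le.2 le_sup_right)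
  refine ⟨⟨sigmaLe ?_, sigmaLe ?_⟩, ⟨sigmaLe h2, sigmaLe ?_⟩, ⟨sigmaLe ?_, sigmaLe ?_⟩, sigmaLe ?_⟩
  · exact sup_le (natSigma_le_of fun u h0 hu => (mK' u h0 hu).sub (mB' u h0 hu)) (natSigma_le_of mS')
  · have hK : ∀ u, 0 ≤ u → u ≤ t → Measurable[NS P (natSigma (fun u ω => Kproc B u ω - B u ω) t ⊔
        natSigma (Kslope B) t)] (Kproc B u) := fun u h0 hu =>
      claimE hB (fun v hv hvt =>
        (measurable_natSigma (Kslope B) hv hvt).mono (le_sup_right.trans le_NS) le_rfl) h0 hu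
    refine sup_le (natSigma_le_of fun u h0 hu => ?_) (natSigma_le_of hK)
    have hD : Measurable[NS P (natSigma (fun u ω => Kproc B u ω - B u ω) t ⊔
        natSigma (Kslope B) t)] (fun ω => Kproc B u ω - B u ω) :=
      (measurable_natSigma (fun u ω => Kproc B u ω - B u ω) h0 hu).mono
        (le_sup_left.trans le_NS) le_rfl
    have := (hK u h0 hu).sub hD
    convert this using 1
    ext ω
    simp
  · exact sup_le (le_sup_left.trans le_NS) (measurable_iff_comap_le.1 (mK' t ht le_rfl))
  · exact sup_le (le_sup_left.trans le_NS) (measurable_iff_comap_le.1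
      (claimC hB ht (mB le_sup_left) (measurable_iff_comap_le.2 le_sup_right)))
  · exact sup_le (le_sup_left.trans le_NS) (measurable_iff_comap_le.1
      ((mS' t ht le_rfl).mono (NS_trans h2) le_rfl))
  · refine sup_le (sup_le (natSigma_le_of fun u h0 hu => ?_)
      (measurable_iff_comap_le.1 (mK' t ht le_rfl))) (measurable_iff_comap_le.1 (mS' t ht le_rfl))
    exact ((mK' u h0 hu).const_mul 2).sub (mB' u h0 hu)
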